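/- Let G be a connected graph of order n₁ and let n₂ ≥ 2 be an integer. If n₁ > n₂, then pd(G⊙N_{n₂}) ≥ n₂ + 1. -/

import Mathlib

/-!
Twins, that is, vertices with the same neighbours apart from each other, are equidistant from every
third vertex, so a resolving partition puts them in different cells. A set `T` of pairwise twins of
`H` gives such a set in every copy of `H` in `G ⊙ H`, hence at least `|T|` cells. If there were
exactly `|T|`, every vertex `v` of `G` would have a neighbour in each cell, and its representation
would be `0` at its own cell and `1` at all others. It would then be determined by its cell, so `G`
would have at most `|T|` vertices. The vertices of `N_{n₂}` are pairwise twins.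
-/

open SimpleGraph

/-- The corona product `G ⊙ H`: one copy of `G`, one copy of `H` for each vertex of `G`,
with the `i`-th vertex of `G` joined to every vertex of the `i`-th copy of `H`. -/
def corona {α β : Type*} (G : SimpleGraph α) (H : SimpleGraph β) :
    SimpleGraph (α ⊕ α × β) :=
  SimpleGraph.fromRel (fun x y =>
    match x, y with
    | Sum.inl a, Sum.inl b => G.Adj a b
    | Sum.inl a, Sum.inr iu => a = iu.1
    | Sum.inr iu, Sum.inr jw => iu.1 = jw.1 ∧ H.Adj iu.2 jw.2
    | _, _ => False)

/-- The distance from a vertex to a set of vertices: `d(v,A) = min_{u ∈ A} d(v,u)`. -/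
noncomputable def setDist {α : Type*} (G : SimpleGraph α) (v : α) (A : Set α) : ℕ :=
  sInf (G.dist v '' A)

/-- `S` is a resolving set for `G`: distinct vertices have distinct metric representations. -/
def IsResolvingSet {α : Type*} (G : SimpleGraph α) (S : Set α) : Prop :=
  ∀ u v : α, (∀ w ∈ S, G.dist u w = G.dist v w) → u = v

/-- The metric dimension of `G`: minimum cardinality of a resolving set. -/
noncomputable def metricDim {α : Type*} (G : SimpleGraph α) : ℕ :=
  sInf {k | ∃ S : Set α, IsResolvingSet G S ∧ S.ncard = k}

/-- A family of sets is a resolving partition for `G` if it is a partition of the vertex set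
into nonempty cells and distinct vertices have distinct partition representations. -/
def IsResolvingPartition {α : Type*} (G : SimpleGraph α) (P : Set (Set α)) : Prop :=
  (∀ A ∈ P, A.Nonempty) ∧ (∀ v : α, ∃! A : Set α, A ∈ P ∧ v ∈ A) ∧
    ∀ u v : α, (∀ A ∈ P, setDist G u A = setDist G v A) → u = v

/-- The partition dimension of `G`: minimum number of cells in a resolving partition. -/
noncomputable def partitionDim {α : Type*} (G : SimpleGraph α) : ℕ :=
  sInf {t | ∃ P : Set (Set α), IsResolvingPartition G P ∧ P.ncard = t}

/-- `c(H)`: the maximum cardinality of a connected component of `H` which is isomorphic to a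
complete graph (i.e. whose vertex set is a clique). -/
noncomputable def maxCompleteComp {β : Type*} (H : SimpleGraph β) : ℕ :=
  sSup {k | ∃ C : H.ConnectedComponent, H.IsClique C.supp ∧ C.supp.ncard = k}

/-- `β(H)`: the number of isolated vertices of `H`. -/
noncomputable def numIsolated {β : Type*} (H : SimpleGraph β) : ℕ :=
  Set.ncard {v : β | ∀ u, ¬ H.Adj v u}

/-- `α(H)`: the number of connected components of `H` of order greater than one. -/
noncomputable def numBigComp {β : Type*} (H : SimpleGraph β) : ℕ :=
  Set.ncard {C : H.ConnectedComponent | 1 < C.supp.ncard}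

section Twins

variable {α : Type*} {G : SimpleGraph α} {u v w : α}

/-- Two vertices are twins if every third vertex is adjacent to both or to neither. The twins may be
adjacent to each other (true twins) or not (false twins), and every vertex is a twin of itself. -/
def AreTwins (G : SimpleGraph α) (u v : α) : Prop :=
  ∀ w, w ≠ u → w ≠ v → (G.Adj u w ↔ G.Adj v w)

lemma areTwins_bot (u v : α) : AreTwins (⊥ : SimpleGraph α) u v :=
  fun _ _ _ => Iff.rfl

lemma AreTwins.symm (h : AreTwins G u v) : AreTwins G v u :=
  fun w hwv hwu => (h w hwu hwv).symm

lemma AreTwins.edist_le (h : AreTwins G u v) (hw : w ≠ u) : G.edist v w ≤ G.edist u w := by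
  refine le_iInf fun p => ?_
  cases p with
  | nil => exact absurd rfl hw
  | @cons _ x _ hux q =>
    by_cases hxv : x = v
    · subst hxv
      exact (SimpleGraph.edist_le q).trans (by simp)
    · exact SimpleGraph.edist_le (.cons ((h x hux.ne' hxv).1 hux) q)

lemma AreTwins.dist_eq (h : AreTwins G u v) (hwu : w ≠ u) (hwv : w ≠ v) :
    G.dist u w = G.dist v w :=
  congrArg ENat.toNat <| (h.symm.edist_le hwv).antisymm (h.edist_le hwu)

end Twins

section SetDist

variable {α : Type*} {G : SimpleGraph α} {u v : α} {A : Set α}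

lemma setDist_singleton (G : SimpleGraph α) (u v : α) : setDist G u {v} = G.dist u v := by
  simp [setDist]

lemma setDist_le_dist (hv : v ∈ A) : setDist G u A ≤ G.dist u v :=
  Nat.sInf_le ⟨v, hv, rfl⟩

lemma setDist_eq_zero_of_mem (hu : u ∈ A) : setDist G u A = 0 :=
  Nat.le_zero.1 <| (setDist_le_dist hu).trans_eq SimpleGraph.dist_self

lemma mem_of_setDist_eq_zero (hG : G.Connected) (hA : A.Nonempty) (h : setDist G u A = 0) :
    u ∈ A := by
  obtain ⟨v, hv, huv⟩ := Nat.sInf_mem (hA.image (G.dist u))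
  rwa [hG.dist_eq_zero_iff.1 (huv.trans h)]

lemma setDist_eq_one (hG : G.Connected) (hu : u ∉ A) (hv : v ∈ A) (huv : G.Adj u v) :
    setDist G u A = 1 := by
  refine le_antisymm ?_ (Nat.one_le_iff_ne_zero.2 fun h => hu (mem_of_setDist_eq_zero hG ⟨v, hv⟩ h))
  exact (setDist_le_dist hv).trans_eq (SimpleGraph.dist_eq_one_iff_adj.2 huv)

lemma AreTwins.setDist_eq (h : AreTwins G u v) (hu : u ∉ A) (hv : v ∉ A) :
    setDist G u A = setDist G v A :=
  congrArg sInf <| Set.image_congr fun _ hw =>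
    h.dist_eq (ne_of_mem_of_not_mem hw hu) (ne_of_mem_of_not_mem hw hv)

end SetDist

namespace IsResolvingPartition

variable {α : Type*} {G : SimpleGraph α} {P : Set (Set α)} {u v : α} {A S T : Set α}

/-- The cell of a resolving partition that contains a given vertex. -/
noncomputable def cell (hP : IsResolvingPartition G P) (v : α) : Set α :=
  (hP.2.1 v).choose

lemma cell_mem (hP : IsResolvingPartition G P) (v : α) : hP.cell v ∈ P :=
  (hP.2.1 v).choose_spec.1.1

lemma mem_cell (hP : IsResolvingPartition G P) (v : α) : v ∈ hP.cell v :=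
  (hP.2.1 v).choose_spec.1.2

lemma cell_eq_of_mem (hP : IsResolvingPartition G P) (hA : A ∈ P) (hv : v ∈ A) : hP.cell v = A :=
  (hP.2.1 v).unique ⟨hP.cell_mem v, hP.mem_cell v⟩ ⟨hA, hv⟩

lemma eq_of_cell_eq (hP : IsResolvingPartition G P) (hcell : hP.cell u = hP.cell v)
    (hdist : ∀ A ∈ P, u ∉ A → v ∉ A → setDist G u A = setDist G v A) : u = v := by
  refine hP.2.2 u v fun A hA => ?_
  have hmem : u ∈ A ↔ v ∈ A :=
    ⟨fun hu => hP.cell_eq_of_mem hA hu ▸ hcell ▸ hP.mem_cell v,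
      fun hv => hP.cell_eq_of_mem hA hv ▸ hcell ▸ hP.mem_cell u⟩
  by_cases hu : u ∈ A
  · rw [setDist_eq_zero_of_mem hu, setDist_eq_zero_of_mem (hmem.1 hu)]
  · exact hdist A hA hu (hmem.not.1 hu)

lemma injOn_cell_of_areTwins (hP : IsResolvingPartition G P) (hT : T.Pairwise (AreTwins G)) :
    T.InjOn hP.cell := by
  intro u hu v hv hcell
  by_contra huv
  exact huv <| hP.eq_of_cell_eq hcell fun _ _ => (hT hu hv huv).setDist_eq

variable [Finite α]

lemma ncard_le_of_injOn_cell (hP : IsResolvingPartition G P) (hS : S.InjOn hP.cell) :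
    S.ncard ≤ P.ncard :=
  Set.ncard_le_ncard_of_injOn hP.cell (fun v _ => hP.cell_mem v) hS

lemma image_cell_eq_of_areTwins (hP : IsResolvingPartition G P) (hT : T.Pairwise (AreTwins G))
    (hPT : P.ncard ≤ T.ncard) : hP.cell '' T = P := by
  refine Set.eq_of_subset_of_ncard_le (Set.image_subset_iff.2 fun v _ => hP.cell_mem v) ?_
  rwa [(hP.injOn_cell_of_areTwins hT).ncard_image]

lemma setDist_eq_one_of_areTwins (hP : IsResolvingPartition G P) (hG : G.Connected)
    (hTv : T ⊆ G.neighborSet v) (hT : T.Pairwise (AreTwins G)) (hPT : P.ncard ≤ T.ncard)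
    (hA : A ∈ P) (hv : v ∉ A) : setDist G v A = 1 := by
  rw [← hP.image_cell_eq_of_areTwins hT hPT] at hA
  obtain ⟨t, ht, rfl⟩ := hA
  exact setDist_eq_one hG hv (hP.mem_cell t) (hTv ht)

lemma injOn_cell_of_forall_exists_areTwins (hP : IsResolvingPartition G P) (hG : G.Connected)
    (hS : ∀ v ∈ S, ∃ T ⊆ G.neighborSet v, T.Pairwise (AreTwins G) ∧ P.ncard ≤ T.ncard) :
    S.InjOn hP.cell := by
  have hone : ∀ v ∈ S, ∀ A ∈ P, v ∉ A → setDist G v A = 1 := by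
    intro v hv A hA hvA
    obtain ⟨T, hTv, hT, hPT⟩ := hS v hv
    exact hP.setDist_eq_one_of_areTwins hG hTv hT hPT hA hvA
  intro u hu v hv hcell
  exact hP.eq_of_cell_eq hcell fun A hA huA hvA => by rw [hone u hu A hA huA, hone v hv A hA hvA]

end IsResolvingPartition

section PartitionDim

variable {α : Type*} {G : SimpleGraph α} {n : ℕ}

lemma isResolvingPartition_range_singleton (hG : G.Connected) :
    IsResolvingPartition G (Set.range fun v => {v}) := by
  refine ⟨?_, fun v => ⟨{v}, ⟨⟨v, rfl⟩, rfl⟩, ?_⟩, fun u v huv => ?_⟩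
  · rintro _ ⟨v, rfl⟩
    exact Set.singleton_nonempty v
  · rintro _ ⟨⟨w, rfl⟩, rfl⟩
    rfl
  · have hdist := huv {v} ⟨v, rfl⟩
    rwa [setDist_singleton, setDist_singleton, SimpleGraph.dist_self,
      hG.dist_eq_zero_iff] at hdist

-- `partitionDim` is an infimum in `ℕ`, so it would be `0` if there were no resolving partition.
lemma le_partitionDim (hG : G.Connected)
    (h : ∀ P : Set (Set α), IsResolvingPartition G P → n ≤ P.ncard) : n ≤ partitionDim G := by
  refine le_csInf ⟨_, _, isResolvingPartition_range_singleton hG, rfl⟩ ?_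
  rintro _ ⟨P, hP, rfl⟩
  exact h P hP

theorem lt_partitionDim_of_forall_exists_areTwins [Finite α] (hG : G.Connected) {S : Set α}
    (hn : n < S.ncard)
    (hS : ∀ v ∈ S, ∃ T ⊆ G.neighborSet v, T.Pairwise (AreTwins G) ∧ n ≤ T.ncard) :
    n < partitionDim G := by
  refine le_partitionDim hG fun P hP => ?_
  by_contra! hPn
  have hinj : S.InjOn hP.cell := hP.injOn_cell_of_forall_exists_areTwins hG fun v hv =>
    let ⟨T, hTv, hT, hnT⟩ := hS v hv
    ⟨T, hTv, hT, (Nat.lt_succ_iff.1 hPn).trans hnT⟩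
  have hSP : S.ncard ≤ P.ncard := hP.ncard_le_of_injOn_cell hinj
  omega

end PartitionDim

section Corona

variable {α β : Type*} {G : SimpleGraph α} {H : SimpleGraph β}

lemma corona_adj_inl_inl {a b : α} : (corona G H).Adj (Sum.inl a) (Sum.inl b) ↔ G.Adj a b := by
  simpa [corona, G.adj_comm b a] using SimpleGraph.Adj.ne

lemma corona_adj_inl_inr {a b : α} {i : β} :
    (corona G H).Adj (Sum.inl a) (Sum.inr (b, i)) ↔ a = b := by
  simp [corona]

lemma corona_adj_inr_inr {a b : α} {i j : β} :
    (corona G H).Adj (Sum.inr (a, i)) (Sum.inr (b, j)) ↔ a = b ∧ H.Adj i j := by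
  simpa [corona, H.adj_comm j i, eq_comm (a := b)] using fun _ hij _ => hij.ne

lemma corona_connected (hG : G.Connected) (H : SimpleGraph β) : (corona G H).Connected := by
  let inlHom : G →g corona G H := ⟨Sum.inl, corona_adj_inl_inl.2⟩
  obtain ⟨r⟩ := hG.nonempty
  have hinl (a : α) : (corona G H).Reachable (Sum.inl r) (Sum.inl a) :=
    (hG.preconnected r a).map inlHom
  refine (SimpleGraph.connected_iff_exists_forall_reachable _).2 ⟨Sum.inl r, ?_⟩
  rintro (a | ⟨a, i⟩)
  · exact hinl a
  · exact (hinl a).trans (corona_adj_inl_inr.2 rfl).reachable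

lemma AreTwins.corona_inr {i j : β} (h : AreTwins H i j) (a : α) :
    AreTwins (corona G H) (Sum.inr (a, i)) (Sum.inr (a, j)) := by
  rintro (b | ⟨b, k⟩) hi hj
  · simp only [SimpleGraph.adj_comm _ _ (Sum.inl b), corona_adj_inl_inr]
  · simp only [corona_adj_inr_inr]
    refine and_congr_right fun hab => h k ?_ ?_ <;> rintro rfl <;> simp_all

theorem stmt13_general [Finite α] [Finite β] (hG : G.Connected) {T : Set β}
    (hT : T.Pairwise (AreTwins H)) (hcard : T.ncard < Nat.card α) :
    T.ncard < partitionDim (corona G H) := by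
  refine lt_partitionDim_of_forall_exists_areTwins (corona_connected hG H)
    (S := Set.range Sum.inl) ?_ ?_
  · rwa [Set.ncard_range_of_injective Sum.inl_injective]
  rintro _ ⟨a, rfl⟩
  have hinj : Function.Injective fun i : β => (Sum.inr (a, i) : α ⊕ α × β) :=
    Sum.inr_injective.comp (Prod.mk_right_injective a)
  refine ⟨(fun i => Sum.inr (a, i)) '' T, ?_, ?_, (Set.ncard_image_of_injective T hinj).ge⟩
  · rintro _ ⟨i, -, rfl⟩
    rw [SimpleGraph.mem_neighborSet, corona_adj_inl_inr]
  · rintro _ ⟨i, hi, rfl⟩ _ ⟨j, hj, rfl⟩ hij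
    exact (hT hi hj fun h => hij (h ▸ rfl)).corona_inr a

end Corona

/-- Let `G` be a connected graph of order `n₁` and `n₂ ≥ 2` an integer. If
`n₁ > n₂`, then `pd(G⊙N_{n₂}) ≥ n₂ + 1`. -/
theorem stmt13 {V : Type*} [Fintype V] (G : SimpleGraph V) (hG : G.Connected)
    (n₁ n₂ : ℕ) (hn₁ : Fintype.card V = n₁) (h₂ : 2 ≤ n₂) (h : n₁ > n₂) :
    partitionDim (corona G (⊥ : SimpleGraph (Fin n₂))) ≥ n₂ + 1 := by
  have htwins : (Set.univ : Set (Fin n₂)).Pairwise (AreTwins ⊥) := fun i _ j _ _ => areTwins_bot i j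
  simpa using stmt13_general hG htwins (by simpa [hn₁] using h)
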